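/- arXiv:2302.08376 — 2 statements merged into one kernel-verified Lean document; each statement's English description precedes it below -/
import Mathlib

section
/- Inside the 2×2 matrices over K = Frac(R), the k-subalgebra generated by the six matrices E₀ = [[1,0],[0,0]], E₁ = [[0,0],[0,1]], U = [[0,a],[0,0]], V = [[0,c],[0,0]], Ū = [[0,0],[1,0]], V̄ = [[0,0],[b/a,0]] is equal to the set of matrices [[p,q],[r,s]] with p, s in the image of R in K, q in the R-submodule I = aR + cR of K, and r in the R-submodule I* = R + (b/a)R of K. -/
open MvPolynomial

/-- `R = k[a,b,c,d]/(ad - bc)`. -/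
abbrev ConeRing (k : Type*) [Field k] : Type _ :=
  MvPolynomial (Fin 4) k ⧸
    Ideal.span {(X 0 * X 3 - X 1 * X 2 : MvPolynomial (Fin 4) k)}

/-- The images of the variables `a, b, c, d` in `R = k[a,b,c,d]/(ad - bc)`. -/
noncomputable def coneGen (k : Type*) [Field k] (i : Fin 4) : ConeRing k :=
  Ideal.Quotient.mk _ (X i)

set_option linter.unusedSimpArgs false in
theorem general_six {k R K : Type*} [Field k] [CommRing R] [Field K] [Algebra k R] [Algebra R K]
    [Algebra k K] [IsScalarTower k R K] (a b c d : R) (had : a * d = b * c)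
    (ha : algebraMap R K a ≠ 0) (hgen : Algebra.adjoin k ({a, b, c, d} : Set R) = ⊤) :
    (Algebra.adjoin k
        ({!![1, 0; 0, 0], !![0, 0; 0, 1],
          !![0, algebraMap R K a; 0, 0], !![0, algebraMap R K c; 0, 0],
          !![0, 0; 1, 0], !![0, 0; algebraMap R K b / algebraMap R K a, 0]} :
          Set (Matrix (Fin 2) (Fin 2) K)) : Set (Matrix (Fin 2) (Fin 2) K))
      = {M : Matrix (Fin 2) (Fin 2) K |
          (∃ p : R, algebraMap R K p = M 0 0) ∧ (∃ s : R, algebraMap R K s = M 1 1) ∧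
          M 0 1 ∈ Submodule.span R ({algebraMap R K a, algebraMap R K c} : Set K) ∧
          M 1 0 ∈ Submodule.span R
            ({1, algebraMap R K b / algebraMap R K a} : Set K)} := by
  have hadK : algebraMap R K a * algebraMap R K d = algebraMap R K b * algebraMap R K c := by
    rw [← map_mul, had, map_mul]
  have hd : algebraMap R K c * (algebraMap R K b / algebraMap R K a) = algebraMap R K d := by
    field_simp
    linear_combination -hadK
  have hb : algebraMap R K a * (algebraMap R K b / algebraMap R K a) = algebraMap R K b := by
    field_simp
  generalize algebraMap R K b / algebraMap R K a = t at hd hb ⊢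
  have key : ∀ q ∈ Submodule.span R ({algebraMap R K a, algebraMap R K c} : Set K),
      ∀ r ∈ Submodule.span R ({1, t} : Set K), ∃ p : R, algebraMap R K p = q * r := by
    intro q hq r hr
    obtain ⟨x, y, rfl⟩ := Submodule.mem_span_pair.1 hq
    obtain ⟨z, w, rfl⟩ := Submodule.mem_span_pair.1 hr
    refine ⟨x * z * a + x * w * b + y * z * c + y * w * d, ?_⟩
    simp only [Algebra.smul_def, map_add, map_mul, ← hd, ← hb]
    ring
  apply Set.Subset.antisymm
  · intro M hM
    induction hM using Algebra.adjoin_induction with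
    | mem x hx =>
      have h0 : ∃ p : R, algebraMap R K p = 0 := ⟨0, map_zero _⟩
      have h1 : ∃ p : R, algebraMap R K p = 1 := ⟨1, map_one _⟩
      have m1 : ∀ u v : K, u ∈ Submodule.span R ({u, v} : Set K) :=
        fun u v => Submodule.subset_span (by simp)
      have m2 : ∀ u v : K, v ∈ Submodule.span R ({u, v} : Set K) :=
        fun u v => Submodule.subset_span (by simp)
      simp only [Set.mem_insert_iff, Set.mem_singleton_iff] at hx
      rcases hx with rfl | rfl | rfl | rfl | rfl | rfl <;>
        simp [h0, h1, m1, m2]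
    | algebraMap r =>
      refine ⟨⟨algebraMap k R r, ?_⟩, ⟨algebraMap k R r, ?_⟩, ?_, ?_⟩ <;>
        simp [Matrix.algebraMap_matrix_apply, ← IsScalarTower.algebraMap_apply]
    | add x y _ _ hx hy =>
      obtain ⟨⟨p, hp⟩, ⟨s, hs⟩, hq, hr⟩ := hx
      obtain ⟨⟨p', hp'⟩, ⟨s', hs'⟩, hq', hr'⟩ := hy
      exact ⟨⟨p + p', by simp [hp, hp']⟩, ⟨s + s', by simp [hs, hs']⟩,
        Submodule.add_mem _ hq hq', Submodule.add_mem _ hr hr'⟩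
    | mul x y _ _ hx hy =>
      obtain ⟨⟨p, hp⟩, ⟨s, hs⟩, hq, hr⟩ := hx
      obtain ⟨⟨p', hp'⟩, ⟨s', hs'⟩, hq', hr'⟩ := hy
      obtain ⟨u, hu⟩ := key _ hq _ hr'
      obtain ⟨v, hv⟩ := key _ hq' _ hr
      refine ⟨⟨p * p' + u, ?_⟩, ⟨v + s * s', ?_⟩, ?_, ?_⟩
      · simp [Matrix.mul_apply, Fin.sum_univ_two, hp, hp', hu]
      · simp [Matrix.mul_apply, Fin.sum_univ_two, hs, hs', hv, mul_comm]
      · rw [Matrix.mul_apply, Fin.sum_univ_two, ← hp, ← hs', mul_comm (x 0 1),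
          ← Algebra.smul_def, ← Algebra.smul_def]
        exact Submodule.add_mem _ (Submodule.smul_mem _ _ hq') (Submodule.smul_mem _ _ hq)
      · rw [Matrix.mul_apply, Fin.sum_univ_two, ← hp', ← hs, mul_comm (x 1 0),
          ← Algebra.smul_def, ← Algebra.smul_def]
        exact Submodule.add_mem _ (Submodule.smul_mem _ _ hr) (Submodule.smul_mem _ _ hr')
  · rintro M ⟨⟨p, hp⟩, ⟨s, hs⟩, hq, hr⟩
    obtain ⟨x, y, hq⟩ := Submodule.mem_span_pair.1 hq
    obtain ⟨z, w, hr⟩ := Submodule.mem_span_pair.1 hr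
    rw [SetLike.mem_coe]
    set A := Algebra.adjoin k ({!![1, 0; 0, 0], !![0, 0; 0, 1],
          !![0, algebraMap R K a; 0, 0], !![0, algebraMap R K c; 0, 0],
          !![0, 0; 1, 0], !![0, 0; t, 0]} : Set (Matrix (Fin 2) (Fin 2) K)) with hA
    have e0 : !![1, 0; 0, 0] ∈ A := Algebra.subset_adjoin (by simp)
    have e1 : !![0, 0; 0, 1] ∈ A := Algebra.subset_adjoin (by simp)
    have eu : !![0, algebraMap R K a; 0, 0] ∈ A := Algebra.subset_adjoin (by simp)
    have ev : !![0, algebraMap R K c; 0, 0] ∈ A := Algebra.subset_adjoin (by simp)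
    have eu' : !![0, 0; 1, 0] ∈ A := Algebra.subset_adjoin (by simp)
    have ev' : !![0, 0; t, 0] ∈ A := Algebra.subset_adjoin (by simp)
    clear_value A
    have T : ∀ {X Y : Matrix (Fin 2) (Fin 2) K}, X ∈ A → X 0 0 = Y 0 0 → X 0 1 = Y 0 1 →
        X 1 0 = Y 1 0 → X 1 1 = Y 1 1 → Y ∈ A := by
      intro X Y hX h1 h2 h3 h4
      have : Y = X := by
        ext i j
        fin_cases i <;> fin_cases j <;> simp [h1, h2, h3, h4]
      exact this ▸ hX
    have P : ∀ p : R, !![algebraMap R K p, 0; 0, 0] ∈ A ∧ !![0, 0; 0, algebraMap R K p] ∈ A := by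
      intro p
      have hp : p ∈ Algebra.adjoin k ({a, b, c, d} : Set R) := hgen ▸ Algebra.mem_top
      induction hp using Algebra.adjoin_induction with
      | mem x hx =>
        simp only [Set.mem_insert_iff, Set.mem_singleton_iff] at hx
        rcases hx with rfl | rfl | rfl | rfl
        · exact ⟨T (A.mul_mem eu eu') (by simp [Algebra.smul_def, hb, hd, mul_comm t]) (by simp [Algebra.smul_def, hb, hd, mul_comm t]) (by simp [Algebra.smul_def, hb, hd, mul_comm t]) (by simp [Algebra.smul_def, hb, hd, mul_comm t]), T (A.mul_mem eu' eu) (by simp [Algebra.smul_def, hb, hd, mul_comm t]) (by simp [Algebra.smul_def, hb, hd, mul_comm t]) (by simp [Algebra.smul_def, hb, hd, mul_comm t]) (by simp [Algebra.smul_def, hb, hd, mul_comm t])⟩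
        · exact ⟨T (A.mul_mem eu ev') (by simp [Algebra.smul_def, hb, hd, mul_comm t]) (by simp [Algebra.smul_def, hb, hd, mul_comm t]) (by simp [Algebra.smul_def, hb, hd, mul_comm t]) (by simp [Algebra.smul_def, hb, hd, mul_comm t]),
            T (A.mul_mem ev' eu) (by simp [Algebra.smul_def, hb, hd, mul_comm t]) (by simp [Algebra.smul_def, hb, hd, mul_comm t]) (by simp [Algebra.smul_def, hb, hd, mul_comm t]) (by simp [Algebra.smul_def, hb, hd, mul_comm t])⟩
        · exact ⟨T (A.mul_mem ev eu') (by simp [Algebra.smul_def, hb, hd, mul_comm t]) (by simp [Algebra.smul_def, hb, hd, mul_comm t]) (by simp [Algebra.smul_def, hb, hd, mul_comm t]) (by simp [Algebra.smul_def, hb, hd, mul_comm t]), T (A.mul_mem eu' ev) (by simp [Algebra.smul_def, hb, hd, mul_comm t]) (by simp [Algebra.smul_def, hb, hd, mul_comm t]) (by simp [Algebra.smul_def, hb, hd, mul_comm t]) (by simp [Algebra.smul_def, hb, hd, mul_comm t])⟩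
        · exact ⟨T (A.mul_mem ev ev') (by simp [Algebra.smul_def, hb, hd, mul_comm t]) (by simp [Algebra.smul_def, hb, hd, mul_comm t]) (by simp [Algebra.smul_def, hb, hd, mul_comm t]) (by simp [Algebra.smul_def, hb, hd, mul_comm t]),
            T (A.mul_mem ev' ev) (by simp [Algebra.smul_def, hb, hd, mul_comm t]) (by simp [Algebra.smul_def, hb, hd, mul_comm t]) (by simp [Algebra.smul_def, hb, hd, mul_comm t]) (by simp [Algebra.smul_def, hb, hd, mul_comm t])⟩
      | algebraMap r =>
        rw [← IsScalarTower.algebraMap_apply]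
        exact ⟨T (A.smul_mem e0 r) (by simp [Algebra.smul_def, hb, hd, mul_comm t]) (by simp [Algebra.smul_def, hb, hd, mul_comm t]) (by simp [Algebra.smul_def, hb, hd, mul_comm t]) (by simp [Algebra.smul_def, hb, hd, mul_comm t]),
          T (A.smul_mem e1 r) (by simp [Algebra.smul_def, hb, hd, mul_comm t]) (by simp [Algebra.smul_def, hb, hd, mul_comm t]) (by simp [Algebra.smul_def, hb, hd, mul_comm t]) (by simp [Algebra.smul_def, hb, hd, mul_comm t])⟩
      | add x y _ _ hx hy =>
        exact ⟨by simpa using A.add_mem hx.1 hy.1, by simpa using A.add_mem hx.2 hy.2⟩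
      | mul x y _ _ hx hy =>
        exact ⟨T (A.mul_mem hx.1 hy.1) (by simp [Algebra.smul_def, hb, hd, mul_comm t]) (by simp [Algebra.smul_def, hb, hd, mul_comm t]) (by simp [Algebra.smul_def, hb, hd, mul_comm t]) (by simp [Algebra.smul_def, hb, hd, mul_comm t]), T (A.mul_mem hx.2 hy.2) (by simp [Algebra.smul_def, hb, hd, mul_comm t]) (by simp [Algebra.smul_def, hb, hd, mul_comm t]) (by simp [Algebra.smul_def, hb, hd, mul_comm t]) (by simp [Algebra.smul_def, hb, hd, mul_comm t])⟩
    have hM : M = !![algebraMap R K p, 0; 0, 0] + !![0, 0; 0, algebraMap R K s]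
        + (!![algebraMap R K x, 0; 0, 0] * !![0, algebraMap R K a; 0, 0]
          + !![algebraMap R K y, 0; 0, 0] * !![0, algebraMap R K c; 0, 0])
        + (!![0, 0; 0, algebraMap R K z] * !![0, 0; 1, 0]
          + !![0, 0; 0, algebraMap R K w] * !![0, 0; t, 0]) := by
      rw [Algebra.smul_def, Algebra.smul_def] at hq hr
      ext i j
      fin_cases i <;> fin_cases j <;> simp [hp, hs, ← hq, ← hr] <;>
        simp [Algebra.smul_def]
    rw [hM]
    exact A.add_mem (A.add_mem (A.add_mem (P p).1 (P s).2)
      (A.add_mem (A.mul_mem (P x).1 eu) (A.mul_mem (P y).1 ev)))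
      (A.add_mem (A.mul_mem (P z).2 eu') (A.mul_mem (P w).2 ev'))

theorem coneGen_rel (k : Type*) [Field k] :
    coneGen k 0 * coneGen k 3 = coneGen k 1 * coneGen k 2 := by
  unfold coneGen
  rw [← map_mul, ← map_mul, Ideal.Quotient.eq]
  exact Ideal.subset_span rfl

theorem coneGen_zero_ne (k : Type*) [Field k] : coneGen k 0 ≠ 0 := by
  intro h
  unfold coneGen at h
  rw [Ideal.Quotient.eq_zero_iff_mem, Ideal.mem_span_singleton] at h
  obtain ⟨q, hq⟩ := h
  have := congrArg (MvPolynomial.eval (fun i : Fin 4 => if i = 0 then (1 : k) else 0)) hq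
  simp at this

theorem coneGen_adjoin (k : Type*) [Field k] :
    Algebra.adjoin k ({coneGen k 0, coneGen k 1, coneGen k 2, coneGen k 3} : Set (ConeRing k))
      = ⊤ := by
  rw [eq_top_iff]
  rintro x -
  obtain ⟨p, rfl⟩ := Ideal.Quotient.mk_surjective x
  induction p using MvPolynomial.induction_on with
  | C r => exact Subalgebra.algebraMap_mem _ r
  | add p q hp hq => rw [map_add]; exact Subalgebra.add_mem _ hp hq
  | mul_X p i hp =>
    rw [map_mul]
    refine Subalgebra.mul_mem _ hp (Algebra.subset_adjoin ?_)
    change coneGen k i ∈ _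
    fin_cases i <;> simp

set_option synthInstance.maxHeartbeats 1000000 in
set_option maxHeartbeats 1000000 in
/-- Inside the `2 × 2` matrices over `K = Frac(R)`, `R = k[a,b,c,d]/(ad - bc)`,
the `k`-subalgebra generated by the six matrices
`E₀ = [[1,0],[0,0]]`, `E₁ = [[0,0],[0,1]]`, `U = [[0,a],[0,0]]`,
`V = [[0,c],[0,0]]`, `Ū = [[0,0],[1,0]]`, `V̄ = [[0,0],[b/a,0]]` equals the set
of matrices `[[p,q],[r,s]]` with `p, s` in the image of `R`, `q ∈ I = aR + cR`
and `r ∈ I* = R + (b/a)R`. -/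
theorem adjoin_six_matrices_eq (k : Type*) [Field k] [IsDomain (ConeRing k)] :
    letI K := FractionRing (ConeRing k)
    letI f : ConeRing k →+* K := algebraMap (ConeRing k) K
    (Algebra.adjoin k
        ({!![1, 0; 0, 0], !![0, 0; 0, 1],
          !![0, f (coneGen k 0); 0, 0], !![0, f (coneGen k 2); 0, 0],
          !![0, 0; 1, 0], !![0, 0; f (coneGen k 1) / f (coneGen k 0), 0]} :
          Set (Matrix (Fin 2) (Fin 2) K)) : Set (Matrix (Fin 2) (Fin 2) K))
      = {M : Matrix (Fin 2) (Fin 2) K |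
          (∃ p : ConeRing k, f p = M 0 0) ∧ (∃ s : ConeRing k, f s = M 1 1) ∧
          M 0 1 ∈ Submodule.span (ConeRing k) ({f (coneGen k 0), f (coneGen k 2)} : Set K) ∧
          M 1 0 ∈ Submodule.span (ConeRing k)
            ({1, f (coneGen k 1) / f (coneGen k 0)} : Set K)} := by
  exact general_six (coneGen k 0) (coneGen k 1) (coneGen k 2) (coneGen k 3) (coneGen_rel k)
    (fun h => coneGen_zero_ne k
      ((IsFractionRing.injective (ConeRing k) (FractionRing (ConeRing k))) (h.trans (map_zero _).symm)))
    (coneGen_adjoin k)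
end

section
/- The center of the k-algebra A is equal to the k-subalgebra of A generated by the four elements a², b², ab + ba, and c². -/
/-- The relations `ac + ca = 0`, `bc + cb = 0`, `ab - ba - 2c³ = 0` on the free
associative algebra `k⟨a,b,c⟩`; quotienting by the ring congruence they generate
is the quotient by the two-sided ideal generated by these three elements. -/
inductive CdvRel (k : Type*) [Field k] :
    FreeAlgebra k (Fin 3) → FreeAlgebra k (Fin 3) → Prop
  | ac : CdvRel k (FreeAlgebra.ι k 0 * FreeAlgebra.ι k 2
      + FreeAlgebra.ι k 2 * FreeAlgebra.ι k 0) 0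
  | bc : CdvRel k (FreeAlgebra.ι k 1 * FreeAlgebra.ι k 2
      + FreeAlgebra.ι k 2 * FreeAlgebra.ι k 1) 0
  | ab : CdvRel k (FreeAlgebra.ι k 0 * FreeAlgebra.ι k 1
      - FreeAlgebra.ι k 1 * FreeAlgebra.ι k 0 - 2 * FreeAlgebra.ι k 2 ^ 3) 0

/-- The algebra `A = k⟨a,b,c⟩/(ac + ca, bc + cb, ab - ba - 2c³)`. -/
abbrev CdvAlgebra (k : Type*) [Field k] : Type _ := RingQuot (CdvRel k)

/-- The images of the generators `a`, `b`, `c` in `A`. -/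
noncomputable def cdvGen (k : Type*) [Field k] (i : Fin 3) : CdvAlgebra k :=
  RingQuot.mkAlgHom k (CdvRel k) (FreeAlgebra.ι k i)


namespace CdvAux

theorem gneg_even (R : Type*) [Ring R] {i : ℕ} (h : Even i) : (-1 : R) ^ i = 1 := h.neg_one_pow
theorem gneg_odd (R : Type*) [Ring R] {i : ℕ} (h : Odd i) : (-1 : R) ^ i = -1 := h.neg_one_pow

section negs
variable {k : Type*} [Field k]

theorem cmul_neg (x y : CdvAlgebra k) : x * -y = -(x * y) := mul_neg x y
theorem cneg_mul (x y : CdvAlgebra k) : -x * y = -(x * y) := neg_mul x y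
theorem cneg_even {i : ℕ} (h : Even i) : (-1 : CdvAlgebra k) ^ i = 1 :=
  gneg_even (CdvAlgebra k) h
theorem cneg_odd {i : ℕ} (h : Odd i) : (-1 : CdvAlgebra k) ^ i = -1 :=
  gneg_odd (CdvAlgebra k) h
theorem csmul_neg (x : k) (y : CdvAlgebra k) : x • -y = -(x • y) := smul_neg x y
theorem cneg_smul (x : k) (y : CdvAlgebra k) : (-x) • y = -(x • y) := neg_smul x y
theorem cneg_neg (y : CdvAlgebra k) : - -y = y := neg_neg y

end negs

section gens
variable (k : Type*) [Field k]

theorem rel_ac : cdvGen k 0 * cdvGen k 2 = - (cdvGen k 2 * cdvGen k 0) := by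
  have h := RingQuot.mkAlgHom_rel k (CdvRel.ac (k := k))
  rw [map_add, map_mul, map_mul, map_zero] at h
  exact eq_neg_of_add_eq_zero_left h

theorem rel_bc : cdvGen k 1 * cdvGen k 2 = - (cdvGen k 2 * cdvGen k 1) := by
  have h := RingQuot.mkAlgHom_rel k (CdvRel.bc (k := k))
  rw [map_add, map_mul, map_mul, map_zero] at h
  exact eq_neg_of_add_eq_zero_left h

theorem rel_ab : cdvGen k 0 * cdvGen k 1 =
    cdvGen k 1 * cdvGen k 0 + 2 * cdvGen k 2 ^ 3 := by
  have h := RingQuot.mkAlgHom_rel k (CdvRel.ab (k := k))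
  rw [map_sub, map_sub, map_mul, map_mul, map_mul, map_pow, map_zero, map_ofNat] at h
  have h2 := sub_eq_zero.mp h
  exact (sub_eq_iff_eq_add'.mp h2)

/-- Induction: a property closed under algebra operations and holding on generators. -/
theorem gen_induction {P : CdvAlgebra k → Prop}
    (hs : ∀ r : k, P (algebraMap k _ r)) (hg : ∀ i, P (cdvGen k i))
    (hm : ∀ x y, P x → P y → P (x * y)) (ha : ∀ x y, P x → P y → P (x + y))
    (u : CdvAlgebra k) : P u := by
  obtain ⟨f, rfl⟩ := RingQuot.mkAlgHom_surjective k (CdvRel k) u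
  induction f using FreeAlgebra.induction with
  | grade0 r => rw [AlgHom.commutes]; exact hs r
  | grade1 i => exact hg i
  | mul x y hx hy => rw [map_mul]; exact hm _ _ hx hy
  | add x y hx hy => rw [map_add]; exact ha _ _ hx hy

end gens

section rep
variable (k : Type*) [Field k]

/-- The space of normal forms. -/
abbrev M : Type _ := (ℕ × ℕ × ℕ) →₀ k

/-- basis vector -/
noncomputable def e (i j l : ℕ) : M k := Finsupp.single (i, j, l) 1

/-- action of `c` -/
noncomputable def opC : Module.End k (M k) :=
  Finsupp.linearCombination k (fun p : ℕ × ℕ × ℕ =>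
    ((-1 : k) ^ (p.1 + p.2.1)) • e k p.1 p.2.1 (p.2.2 + 1))

/-- action of `b` -/
noncomputable def opB : Module.End k (M k) :=
  Finsupp.linearCombination k (fun p : ℕ × ℕ × ℕ => e k (p.1 + 1) p.2.1 p.2.2)

/-- action of `a` -/
noncomputable def opA : Module.End k (M k) :=
  Finsupp.linearCombination k (fun p : ℕ × ℕ × ℕ =>
    e k p.1 (p.2.1 + 1) p.2.2 +
      (if Odd p.1 then (2 * (-1 : k) ^ p.2.1) else 0) • e k (p.1 - 1) p.2.1 (p.2.2 + 3))

theorem opC_e (i j l : ℕ) : opC k (e k i j l) = ((-1 : k) ^ (i + j)) • e k i j (l + 1) := by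
  simp [opC, e, Finsupp.linearCombination_single]

theorem opB_e (i j l : ℕ) : opB k (e k i j l) = e k (i + 1) j l := by
  simp [opB, e, Finsupp.linearCombination_single]

theorem opA_even (i j l : ℕ) : opA k (e k (i + i) j l) = e k (i + i) (j + 1) l := by
  have : ¬ Odd (i + i) := by simp
  rw [opA, e, Finsupp.linearCombination_single]
  simp [this]

theorem opA_odd (i j l : ℕ) : opA k (e k (i + i + 1) j l) = e k (i + i + 1) (j + 1) l
    + (2 * (-1 : k) ^ j) • e k (i + i) j (l + 3) := by
  have : Odd (i + i + 1) := by simp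
  rw [opA, e, Finsupp.linearCombination_single]
  simp [this]

theorem hom_ext {N : Type*} [AddCommGroup N] [Module k N] {f g : M k →ₗ[k] N}
    (h0 : ∀ i j l, f (e k (i + i) j l) = g (e k (i + i) j l))
    (h1 : ∀ i j l, f (e k (i + i + 1) j l) = g (e k (i + i + 1) j l)) : f = g := by
  apply Finsupp.lhom_ext'
  rintro ⟨i, j, l⟩
  apply LinearMap.ext_ring
  rcases Nat.even_or_odd' i with ⟨m, rfl | rfl⟩
  · have := h0 m j l
    rw [two_mul]; simpa [e] using this
  · have := h1 m j l
    rw [two_mul]; simpa [e] using this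

theorem op_ac : opA k * opC k + opC k * opA k = 0 := by
  apply hom_ext
  · intro i j l
    simp only [LinearMap.add_apply, Module.End.mul_apply, opC_e, map_smul, opA_even,
      LinearMap.zero_apply, ← add_smul]
    simp [pow_add]
  · intro i j l
    simp only [LinearMap.add_apply, Module.End.mul_apply, opC_e, map_smul, opA_odd,
      LinearMap.zero_apply, map_add, smul_add, smul_smul]
    simp only [show l + 1 + 3 = l + 3 + 1 by ring]
    have h1 : ((-1 : k)) ^ (i + i + 1 + j) = - (-1) ^ j := by
      rw [pow_add, pow_succ, Even.neg_one_pow ⟨i, rfl⟩]; ring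
    have h2 : ((-1 : k)) ^ (i + i + 1 + (j + 1)) = (-1) ^ j := by
      rw [pow_add, pow_succ, Even.neg_one_pow ⟨i, rfl⟩]; ring
    have h3 : ((-1 : k)) ^ (i + i + j) = (-1) ^ j := by
      rw [pow_add, Even.neg_one_pow ⟨i, rfl⟩, one_mul]
    rw [h1, h2, h3]
    module

theorem op_bc : opB k * opC k + opC k * opB k = 0 := by
  apply hom_ext <;>
  · intro i j l
    simp only [LinearMap.add_apply, Module.End.mul_apply, opC_e, map_smul, opB_e,
      LinearMap.zero_apply, ← add_smul]
    simp [pow_add]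

theorem op_C3 (i j l : ℕ) :
    (2 * opC k ^ 3 : Module.End k (M k)) (e k i j l) = (2 * (-1 : k) ^ (i + j)) • e k i j (l + 3) := by
  have : (2 * opC k ^ 3 : Module.End k (M k)) = (2 : k) • (opC k * (opC k * opC k)) := by
    rw [two_smul, two_mul]; noncomm_ring
  rw [this]
  simp only [LinearMap.smul_apply, Module.End.mul_apply, opC_e, map_smul, smul_smul]
  congr 1
  have : ((-1 : k) ^ (i + j)) * ((-1 : k) ^ (i + j)) = 1 := by
    rw [← mul_pow]; simp
  linear_combination 2 * (-1 : k) ^ (i + j) * this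

theorem op_ab : opA k * opB k - opB k * opA k - 2 * opC k ^ 3 = 0 := by
  apply hom_ext
  · intro i j l
    simp only [LinearMap.sub_apply, op_C3, LinearMap.zero_apply]
    simp only [Module.End.mul_apply, opB_e, opA_even, opA_odd]
    have h3 : ((-1 : k)) ^ (i + i + j) = (-1) ^ j := by
      rw [pow_add, Even.neg_one_pow ⟨i, rfl⟩, one_mul]
    rw [h3]
    module
  · intro i j l
    simp only [LinearMap.sub_apply, op_C3, LinearMap.zero_apply]
    have h4 := opA_even k (i + 1) j l
    rw [show i + 1 + (i + 1) = i + i + 1 + 1 by ring] at h4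
    simp only [Module.End.mul_apply, opB_e, opA_odd, map_add, map_smul, h4]
    have h1 : ((-1 : k)) ^ (i + i + 1 + j) = - (-1) ^ j := by
      rw [pow_add, pow_succ, Even.neg_one_pow ⟨i, rfl⟩]; ring
    rw [h1]
    module

/-- The operators. -/
noncomputable def op (i : Fin 3) : Module.End k (M k) := ![opA k, opB k, opC k] i

/-- The representation. -/
noncomputable def rho : CdvAlgebra k →ₐ[k] Module.End k (M k) :=
  RingQuot.liftAlgHom k ⟨FreeAlgebra.lift k (op k), by
    intro x y h
    cases h with
    | ac => simpa [op] using op_ac k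
    | bc => simpa [op] using op_bc k
    | ab =>
      have h2 : FreeAlgebra.lift k (op k) 2 = 2 := map_ofNat _ 2
      simpa [op, h2] using op_ab k⟩

theorem rho_gen (i : Fin 3) : rho k (cdvGen k i) = op k i := by
  simp [rho, cdvGen]

/-- normal form to algebra -/
noncomputable def sig : M k →ₗ[k] CdvAlgebra k :=
  Finsupp.linearCombination k (fun p : ℕ × ℕ × ℕ =>
    cdvGen k 1 ^ p.1 * cdvGen k 0 ^ p.2.1 * cdvGen k 2 ^ p.2.2)

theorem sig_e (i j l : ℕ) :
    sig k (e k i j l) = cdvGen k 1 ^ i * cdvGen k 0 ^ j * cdvGen k 2 ^ l := by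
  simp [sig, e, Finsupp.linearCombination_single]

end rep

section ringfacts
variable {R : Type*} [Ring R] {a b c : R}

theorem c_apow (h : a * c = - (c * a)) (j : ℕ) : c * a ^ j = (-1) ^ j * (a ^ j * c) := by
  induction j with
  | zero => simp
  | succ j ih =>
    have h' : c * a = - (a * c) := by rw [h, neg_neg]
    calc c * a ^ (j + 1) = (c * a ^ j) * a := by rw [pow_succ, mul_assoc]
      _ = (-1) ^ j * (a ^ j * (c * a)) := by rw [ih]; simp only [mul_assoc]
      _ = _ := by rw [h', pow_succ, pow_succ]; simp [mul_assoc]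

theorem comm_c2 (h : a * c = - (c * a)) : a * c ^ 2 = c ^ 2 * a := by
  rw [sq, ← mul_assoc, h, neg_mul, mul_assoc, h]; simp [mul_assoc]

theorem a_c3 (h : a * c = - (c * a)) : a * c ^ 3 = - (c ^ 3 * a) := by
  rw [pow_succ, ← mul_assoc, comm_c2 h, mul_assoc, h]; simp [mul_assoc]

theorem a_b2 (hb : b * c = - (c * b)) (hab : a * b = b * a + 2 * c ^ 3) :
    a * b ^ 2 = b ^ 2 * a := by
  have h3 := a_c3 hb
  have : b * (2 * c ^ 3) = - (2 * c ^ 3 * b) := by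
    rw [two_mul, mul_add, h3]; noncomm_ring
  rw [sq, ← mul_assoc, hab, add_mul, mul_assoc, hab, mul_add, this, mul_assoc, mul_assoc b b a]
  abel

theorem b_a2 (ha : a * c = - (c * a)) (hab : a * b = b * a + 2 * c ^ 3) :
    b * a ^ 2 = a ^ 2 * b := by
  have h3 := a_c3 ha
  have : a * (2 * c ^ 3) = - (2 * c ^ 3 * a) := by
    rw [two_mul, mul_add, h3]; noncomm_ring
  have h5 : a ^ 2 * b = a * (a * b) := by rw [sq, mul_assoc]
  rw [h5, hab, mul_add, this, ← mul_assoc, hab, sq, add_mul, mul_assoc]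
  abel

theorem c_ba (ha : a * c = - (c * a)) (hb : b * c = - (c * b)) :
    c * (b * a) = b * a * c := by
  rw [mul_assoc, ha, mul_neg, ← mul_assoc, ← mul_assoc, hb]; simp

end ringfacts

section faithful
variable (k : Type*) [Field k]

theorem sig_C (m : M k) : sig k (opC k m) = cdvGen k 2 * sig k m := by
  have : sig k ∘ₗ opC k = LinearMap.mulLeft k (cdvGen k 2) ∘ₗ sig k := by
    have key : ∀ i j l, sig k (opC k (e k i j l)) = cdvGen k 2 * sig k (e k i j l) := by
      intro i j l
      rw [opC_e, map_smul, sig_e, sig_e, ← mul_assoc, ← mul_assoc, c_apow (rel_bc k),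
        mul_assoc ((-1) ^ i), mul_assoc _ (cdvGen k 2) (cdvGen k 0 ^ j), c_apow (rel_ac k)]
      rw [pow_add]
      rcases Nat.even_or_odd i with hi | hi <;> rcases Nat.even_or_odd j with hj | hj <;>
        [rw [cneg_even hi, cneg_even hj]; rw [cneg_even hi, cneg_odd hj];
          rw [cneg_odd hi, cneg_even hj]; rw [cneg_odd hi, cneg_odd hj]] <;>
        simp only [hi.neg_one_pow, hj.neg_one_pow, pow_succ', mul_assoc, cmul_neg, cneg_mul,
          cneg_smul, csmul_neg, one_mul, mul_one, one_smul, cneg_neg, neg_mul, mul_neg, neg_neg]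
    apply hom_ext <;> intro i j l <;> exact key _ _ _
  exact LinearMap.congr_fun this m

theorem sig_B (m : M k) : sig k (opB k m) = cdvGen k 1 * sig k m := by
  have : sig k ∘ₗ opB k = LinearMap.mulLeft k (cdvGen k 1) ∘ₗ sig k := by
    have key : ∀ i j l, sig k (opB k (e k i j l)) = cdvGen k 1 * sig k (e k i j l) := by
      intro i j l
      rw [opB_e, sig_e, sig_e, pow_succ']
      simp only [mul_assoc]
    apply hom_ext <;> intro i j l <;> exact key _ _ _
  exact LinearMap.congr_fun this m

theorem a_beven (i : ℕ) : cdvGen k 0 * cdvGen k 1 ^ (i + i) = cdvGen k 1 ^ (i + i) * cdvGen k 0 := by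
  have h : Commute (cdvGen k 0) (cdvGen k 1 ^ 2) := a_b2 (rel_bc k) (rel_ab k)
  have h2 := h.pow_right i
  rw [← pow_mul, two_mul] at h2
  exact h2

theorem c3_apow (j : ℕ) : cdvGen k 2 ^ 3 * cdvGen k 0 ^ j =
    (-1) ^ j * (cdvGen k 0 ^ j * cdvGen k 2 ^ 3) :=
  c_apow (a_c3 (rel_ac k)) j

theorem sig_A (m : M k) : sig k (opA k m) = cdvGen k 0 * sig k m := by
  have : sig k ∘ₗ opA k = LinearMap.mulLeft k (cdvGen k 0) ∘ₗ sig k := by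
    apply hom_ext
    · intro i j l
      simp only [LinearMap.comp_apply, LinearMap.mulLeft_apply]
      rw [opA_even, sig_e, sig_e, ← mul_assoc, ← mul_assoc, a_beven, pow_succ']
      simp only [mul_assoc]
    · intro i j l
      simp only [LinearMap.comp_apply, LinearMap.mulLeft_apply]
      rw [opA_odd, map_add, map_smul, sig_e, sig_e, sig_e, ← mul_assoc, ← mul_assoc,
        pow_succ (cdvGen k 1) (i + i), ← mul_assoc, a_beven, mul_assoc _ (cdvGen k 0) (cdvGen k 1),
        rel_ab, mul_add, add_mul, add_mul]
      congr 1
      · rw [pow_succ']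
        simp only [mul_assoc]
      · rw [← mul_assoc, mul_assoc _ (cdvGen k 2 ^ 3), c3_apow]
        have h2 : cdvGen k 1 ^ (i + i) * 2 = (2 : k) • cdvGen k 1 ^ (i + i) := by
          rw [two_smul, mul_two]
        rw [h2, mul_smul, add_comm l 3, pow_add (cdvGen k 2)]
        rcases Nat.even_or_odd j with hj | hj <;> [rw [cneg_even hj]; rw [cneg_odd hj]] <;>
          simp [hj.neg_one_pow, mul_assoc, cmul_neg, cneg_mul, cneg_smul, csmul_neg]
  exact LinearMap.congr_fun this m

theorem sig_rho (u : CdvAlgebra k) : ∀ m : M k, sig k (rho k u m) = u * sig k m := by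
  induction u using gen_induction with
  | hs r => intro m; rw [AlgHom.commutes, Module.algebraMap_end_apply, map_smul, Algebra.smul_def]
  | hg i =>
    intro m
    rw [rho_gen]
    fin_cases i
    · exact sig_A k m
    · exact sig_B k m
    · exact sig_C k m
  | hm x y hx hy => intro m; rw [map_mul, Module.End.mul_apply, hx, hy, mul_assoc]
  | ha x y hx hy => intro m; rw [map_add, LinearMap.add_apply, map_add, hx, hy, add_mul]

theorem eq_zero_of (u : CdvAlgebra k) (h : rho k u (e k 0 0 0) = 0) : u = 0 := by
  have := sig_rho k u (e k 0 0 0)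
  rw [h, sig_e] at this
  simpa using this.symm

theorem c_reg (u : CdvAlgebra k) (h : cdvGen k 2 * u = 0) : u = 0 := by
  apply eq_zero_of
  set m := rho k u (e k 0 0 0) with hm
  have h1 : opC k m = 0 := by
    have : rho k (cdvGen k 2 * u) (e k 0 0 0) = 0 := by rw [h]; simp
    rwa [map_mul, rho_gen] at this
  let D : Module.End k (M k) := Finsupp.linearCombination k (fun p : ℕ × ℕ × ℕ =>
    ((-1 : k) ^ (p.1 + p.2.1)) • e k p.1 p.2.1 (p.2.2 - 1))
  have hD : D * opC k = 1 := by
    have key : ∀ i j l, (D * opC k) (e k i j l) = e k i j l := by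
      intro i j l
      have : D (e k i j (l + 1)) = ((-1 : k) ^ (i + j)) • e k i j l := by
        simp [D, e, Finsupp.linearCombination_single]
      rw [Module.End.mul_apply, opC_e, map_smul, this, smul_smul, ← mul_pow]
      simp
    apply hom_ext <;> intro i j l <;> exact key _ _ _
  have := LinearMap.congr_fun hD m
  rw [Module.End.mul_apply, h1, map_zero] at this
  exact this.symm

theorem a_reg (u : CdvAlgebra k) (h : cdvGen k 0 * u = 0) : u = 0 := by
  apply eq_zero_of
  set m := rho k u (e k 0 0 0) with hm
  have h1 : opA k m = 0 := by
    have : rho k (cdvGen k 0 * u) (e k 0 0 0) = 0 := by rw [h]; simp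
    rwa [map_mul, rho_gen] at this
  let D : Module.End k (M k) := Finsupp.linearCombination k (fun p : ℕ × ℕ × ℕ =>
    e k p.1 (p.2.1 - 2) p.2.2)
  have hDe : ∀ i j l, D (e k i (j + 1 + 1) l) = e k i j l := by
    intro i j l
    simp [D, e, Finsupp.linearCombination_single]
  have hD : D * (opA k * opA k) = 1 := by
    apply hom_ext
    · intro i j l
      simp only [Module.End.mul_apply, opA_even, hDe, Module.End.one_apply]
    · intro i j l
      simp only [Module.End.mul_apply, opA_even, opA_odd, map_add, map_smul, Module.End.one_apply]
      rw [hDe, add_assoc, ← add_smul]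
      simp [pow_succ]
  have := LinearMap.congr_fun hD m
  rw [Module.End.mul_apply, Module.End.mul_apply, h1, map_zero, map_zero] at this
  exact this.symm

end faithful

section main
set_option linter.unusedSectionVars false
set_option linter.unusedSimpArgs false
variable (k : Type*) [Field k] [CharZero k]

/-- The candidate center. -/
noncomputable abbrev Z : Subalgebra k (CdvAlgebra k) :=
  Algebra.adjoin k {cdvGen k 0 ^ 2, cdvGen k 1 ^ 2,
            cdvGen k 0 * cdvGen k 1 + cdvGen k 1 * cdvGen k 0,
            cdvGen k 2 ^ 2}

theorem central_of_gens (z : CdvAlgebra k) (h : ∀ i, cdvGen k i * z = z * cdvGen k i) :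
    z ∈ Subalgebra.center k (CdvAlgebra k) := by
  rw [Subalgebra.mem_center_iff]
  intro u
  induction u using gen_induction with
  | hs r => exact Algebra.commutes r z
  | hg i => exact h i
  | hm x y hx hy => rw [mul_assoc, hy, ← mul_assoc, hx, mul_assoc]
  | ha x y hx hy => rw [add_mul, mul_add, hx, hy]

theorem Z_le : Z k ≤ Subalgebra.center k (CdvAlgebra k) := by
  apply Algebra.adjoin_le
  have hac := rel_ac k
  have hbc := rel_bc k
  have hab := rel_ab k
  have ha2 := b_a2 hac hab
  have hb2 := a_b2 hbc hab
  have hca : cdvGen k 2 * cdvGen k 0 = - (cdvGen k 0 * cdvGen k 2) := by rw [hac, neg_neg]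
  have hcb : cdvGen k 2 * cdvGen k 1 = - (cdvGen k 1 * cdvGen k 2) := by rw [hbc, neg_neg]
  rintro z (rfl | rfl | rfl | rfl) <;> apply central_of_gens <;> intro i <;> fin_cases i
  · exact (pow_succ' _ _).symm.trans (pow_succ _ _)
  · exact ha2
  · exact comm_c2 hca
  · exact hb2
  · exact (pow_succ' _ _).symm.trans (pow_succ _ _)
  · exact comm_c2 hcb
  · change cdvGen k 0 * _ = _ * cdvGen k 0
    have : cdvGen k 0 * (cdvGen k 0 * cdvGen k 1) = cdvGen k 1 * cdvGen k 0 * cdvGen k 0 := by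
      rw [← mul_assoc, ← sq, ← ha2, sq, mul_assoc]
    rw [mul_add, this, add_mul, ← mul_assoc, add_comm]
  · change cdvGen k 1 * _ = _ * cdvGen k 1
    have : cdvGen k 1 * (cdvGen k 1 * cdvGen k 0) = cdvGen k 0 * cdvGen k 1 * cdvGen k 1 := by
      rw [← mul_assoc, ← sq, ← hb2, sq, mul_assoc]
    rw [mul_add, this, add_mul, ← mul_assoc, add_comm]
  · change cdvGen k 2 * _ = _ * cdvGen k 2
    rw [mul_add, add_mul, c_ba hac hbc, c_ba hbc hac]
  · exact comm_c2 hac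
  · exact comm_c2 hbc
  · exact (pow_succ' _ _).symm.trans (pow_succ _ _)

theorem Z_comm {z : CdvAlgebra k} (hz : z ∈ Z k) (u : CdvAlgebra k) : u * z = z * u :=
  Subalgebra.mem_center_iff.mp (Z_le k hz) u

/-- Elements in standard form. -/
def Std (u : CdvAlgebra k) : Prop :=
  ∃ p ∈ Z k, ∃ q ∈ Z k, ∃ r ∈ Z k, ∃ s ∈ Z k, ∃ v ∈ Z k, ∃ w ∈ Z k,
    u = p + q * cdvGen k 2 + r * cdvGen k 0 + s * cdvGen k 1
      + v * (cdvGen k 0 * cdvGen k 2) + w * (cdvGen k 1 * cdvGen k 2)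

theorem exists_w : ∃ W ∈ Z k, cdvGen k 0 * cdvGen k 1 = W + cdvGen k 2 ^ 2 * cdvGen k 2 ∧
    cdvGen k 1 * cdvGen k 0 = W - cdvGen k 2 ^ 2 * cdvGen k 2 := by
  refine ⟨cdvGen k 1 * cdvGen k 0 + cdvGen k 2 ^ 3, ?_, ?_, ?_⟩
  · have h : cdvGen k 0 * cdvGen k 1 + cdvGen k 1 * cdvGen k 0 ∈ Z k :=
      Algebra.subset_adjoin (by simp)
    have h2 := (Z k).smul_mem h (2⁻¹ : k)
    convert h2 using 1
    rw [rel_ab]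
    rw [eq_inv_smul_iff₀ (two_ne_zero), two_smul, two_mul]
    abel
  · rw [rel_ab, pow_succ (cdvGen k 2) 2, two_mul]; abel
  · rw [pow_succ (cdvGen k 2) 2]; abel

theorem std_mul_left (u : CdvAlgebra k) : ∀ n, Std k n → Std k (u * n) := by
  have hx : cdvGen k 0 ^ 2 ∈ Z k := Algebra.subset_adjoin (by simp)
  have hy : cdvGen k 1 ^ 2 ∈ Z k := Algebra.subset_adjoin (by simp)
  have ht : cdvGen k 2 ^ 2 ∈ Z k := Algebra.subset_adjoin (by simp)
  obtain ⟨W, hW, hab, hba⟩ := exists_w k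
  have hac := rel_ac k
  have hbc := rel_bc k
  have hca : cdvGen k 2 * cdvGen k 0 = - (cdvGen k 0 * cdvGen k 2) := by rw [hac, neg_neg]
  have hcb : cdvGen k 2 * cdvGen k 1 = - (cdvGen k 1 * cdvGen k 2) := by rw [hbc, neg_neg]
  have sw : ∀ p ∈ Z k, ∀ g h : CdvAlgebra k, g * (p * h) = p * (g * h) := by
    intro p hp g h
    rw [← mul_assoc, Z_comm k hp, mul_assoc]
  induction u using gen_induction with
  | hs r =>
    rintro n ⟨p, hp, q, hq, r', hr, s, hs, v, hv, w, hw, rfl⟩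
    have hr0 : algebraMap k (CdvAlgebra k) r ∈ Z k := (Z k).algebraMap_mem r
    refine ⟨_, mul_mem hr0 hp, _, mul_mem hr0 hq, _, mul_mem hr0 hr, _, mul_mem hr0 hs,
      _, mul_mem hr0 hv, _, mul_mem hr0 hw, ?_⟩
    simp only [mul_add, mul_assoc]
  | hm x y hx hy => intro n hn; rw [mul_assoc]; exact hx _ (hy _ hn)
  | ha x y hx hy =>
    intro n hn
    rw [add_mul]
    obtain ⟨p, hp, q, hq, r, hr, s, hs, v, hv, w, hw, h⟩ := hx n hn
    obtain ⟨p', hp', q', hq', r', hr', s', hs', v', hv', w', hw', h'⟩ := hy n hn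
    refine ⟨_, add_mem hp hp', _, add_mem hq hq', _, add_mem hr hr', _, add_mem hs hs',
      _, add_mem hv hv', _, add_mem hw hw', ?_⟩
    rw [h, h']
    simp only [add_mul]
    abel
  | hg i =>
    rintro n ⟨p, hp, q, hq, r, hr, s, hs, v, hv, w, hw, rfl⟩
    fin_cases i
    · refine ⟨r * cdvGen k 0 ^ 2 + s * W + w * (cdvGen k 2 ^ 2 * cdvGen k 2 ^ 2), ?_,
        s * cdvGen k 2 ^ 2 + v * cdvGen k 0 ^ 2 + w * W, ?_, p, hp, 0, zero_mem _, q, hq,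
        0, zero_mem _, ?_⟩
      · exact add_mem (add_mem (mul_mem hr hx) (mul_mem hs hW)) (mul_mem hw (mul_mem ht ht))
      · exact add_mem (add_mem (mul_mem hs ht) (mul_mem hv hx)) (mul_mem hw hW)
      · change cdvGen k 0 * _ = _
        have e1 : cdvGen k 0 * (cdvGen k 0 * cdvGen k 2) = cdvGen k 0 ^ 2 * cdvGen k 2 := by
          rw [sq, mul_assoc]
        have e2 : cdvGen k 0 * (cdvGen k 1 * cdvGen k 2) =
            W * cdvGen k 2 + cdvGen k 2 ^ 2 * cdvGen k 2 ^ 2 := by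
          rw [← mul_assoc, hab, add_mul, mul_assoc, ← sq]
        simp only [mul_add, sw _ hq, sw _ hr, sw _ hs, sw _ hv, sw _ hw, Z_comm k hp, e1, e2, hab,
          ← sq]
        simp only [add_mul, mul_add, mul_assoc, zero_mul]
        abel
    · refine ⟨r * W + s * cdvGen k 1 ^ 2 - v * (cdvGen k 2 ^ 2 * cdvGen k 2 ^ 2), ?_,
        - (r * cdvGen k 2 ^ 2) + v * W + w * cdvGen k 1 ^ 2, ?_, 0, zero_mem _, p, hp,
        0, zero_mem _, q, hq, ?_⟩
      · exact sub_mem (add_mem (mul_mem hr hW) (mul_mem hs hy)) (mul_mem hv (mul_mem ht ht))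
      · exact add_mem (add_mem (neg_mem (mul_mem hr ht)) (mul_mem hv hW)) (mul_mem hw hy)
      · change cdvGen k 1 * _ = _
        have e1 : cdvGen k 1 * (cdvGen k 1 * cdvGen k 2) = cdvGen k 1 ^ 2 * cdvGen k 2 := by
          rw [sq, mul_assoc]
        have e2 : cdvGen k 1 * (cdvGen k 0 * cdvGen k 2) =
            W * cdvGen k 2 - cdvGen k 2 ^ 2 * cdvGen k 2 ^ 2 := by
          rw [← mul_assoc, hba, sub_mul, mul_assoc, ← sq]
        simp only [mul_add, sw _ hq, sw _ hr, sw _ hs, sw _ hv, sw _ hw, Z_comm k hp, e1, e2, hba,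
          ← sq]
        simp only [add_mul, mul_add, mul_sub, sub_mul, cneg_mul, mul_assoc, zero_mul]
        abel
    · refine ⟨q * cdvGen k 2 ^ 2, mul_mem hq ht, p, hp, - (v * cdvGen k 2 ^ 2),
        neg_mem (mul_mem hv ht), - (w * cdvGen k 2 ^ 2), neg_mem (mul_mem hw ht),
        - r, neg_mem hr, - s, neg_mem hs, ?_⟩
      change cdvGen k 2 * _ = _
      have e1 : cdvGen k 2 * (cdvGen k 0 * cdvGen k 2) = - (cdvGen k 2 ^ 2 * cdvGen k 0) := by
        rw [hac, cmul_neg, sq, mul_assoc]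
      have e2 : cdvGen k 2 * (cdvGen k 1 * cdvGen k 2) = - (cdvGen k 2 ^ 2 * cdvGen k 1) := by
        rw [hbc, cmul_neg, sq, mul_assoc]
      simp only [mul_add, sw _ hq, sw _ hr, sw _ hs, sw _ hv, sw _ hw, Z_comm k hp, e1, e2, hca,
        hcb, ← sq]
      simp only [cneg_mul, cmul_neg, mul_assoc]
      abel

theorem std_all (u : CdvAlgebra k) : Std k u := by
  have h1 : Std k 1 := by
    refine ⟨1, one_mem _, 0, zero_mem _, 0, zero_mem _, 0, zero_mem _, 0, zero_mem _,
      0, zero_mem _, ?_⟩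
    simp
  simpa using std_mul_left k u 1 h1

theorem self_neg {x : CdvAlgebra k} (h : x = - x) : x = 0 := by
  have h2 : (2 : k) • x = 0 := by
    rw [two_smul]; nth_rewrite 1 [h]; simp
  exact (smul_eq_zero.mp h2).resolve_left two_ne_zero

theorem center_le : Subalgebra.center k (CdvAlgebra k) ≤ Z k := by
  intro u hu
  rw [Subalgebra.mem_center_iff] at hu
  obtain ⟨p, hp, q, hq, r, hr, s, hs, v, hv, w, hw, h⟩ := std_all k u
  have hac := rel_ac k
  have hbc := rel_bc k
  have sw : ∀ p ∈ Z k, ∀ g h : CdvAlgebra k, g * (p * h) = p * (g * h) := by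
    intro p hp g h
    rw [← mul_assoc, Z_comm k hp, mul_assoc]
  have hca : cdvGen k 2 * cdvGen k 0 = - (cdvGen k 0 * cdvGen k 2) := by rw [hac, neg_neg]
  have hcb : cdvGen k 2 * cdvGen k 1 = - (cdvGen k 1 * cdvGen k 2) := by rw [hbc, neg_neg]
  obtain ⟨o, ho⟩ : ∃ o, o = r * cdvGen k 0 + s * cdvGen k 1
      + v * (cdvGen k 0 * cdvGen k 2) + w * (cdvGen k 1 * cdvGen k 2) := ⟨_, rfl⟩
  have hu' : u = p + q * cdvGen k 2 + o := by rw [h, ho]; abel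
  have hco : cdvGen k 2 * o = - (o * cdvGen k 2) := by
    rw [ho]
    simp only [mul_add, add_mul, sw _ hr, sw _ hs, sw _ hv, sw _ hw, hca, hcb]
    simp only [← mul_assoc (cdvGen k 2), hca, hcb]
    simp only [mul_assoc, cneg_mul, cmul_neg]
    abel
  have ho0 : o = 0 := by
    apply c_reg
    apply self_neg
    have h1 := hu (cdvGen k 2)
    rw [hu', mul_add, mul_add, add_mul, add_mul, Z_comm k hp, sw _ hq, mul_assoc q] at h1
    have h2 := add_left_cancel h1
    nth_rewrite 1 [h2]
    rw [hco, neg_neg]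
  rw [ho0, add_zero] at hu'
  have hq0 : q * cdvGen k 2 = 0 := by
    apply a_reg
    apply self_neg
    have h1 := hu (cdvGen k 0)
    rw [hu', mul_add, add_mul, Z_comm k hp] at h1
    have h2 := add_left_cancel h1
    nth_rewrite 1 [h2]
    rw [sw _ hq, mul_assoc, hca, cmul_neg]
  rw [hu', hq0, add_zero]
  exact hp

end main

end CdvAux

/-- The center of `A` is the `k`-subalgebra generated by `a²`, `b²`, `ab + ba`
and `c²`. -/
theorem cdv_center_eq_adjoin (k : Type*) [Field k] [CharZero k] :
    Subalgebra.center k (CdvAlgebra k)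
      = Algebra.adjoin k
          {cdvGen k 0 ^ 2, cdvGen k 1 ^ 2,
            cdvGen k 0 * cdvGen k 1 + cdvGen k 1 * cdvGen k 0,
            cdvGen k 2 ^ 2} := by
  exact le_antisymm (CdvAux.center_le k) (CdvAux.Z_le k)
end
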